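/- Let a ≥ 3 be an integer, d = a²−4, ε = (a+√d)/2, U = [[a,−1],[1,0]], A = [[1,1],[ε⁻¹,ε]]. For t ∈ ℝ define τ_t = (U·A·diag(e^{t/2}, e^{−t/2})) · i via the Möbius action on the upper half plane. Then for t_n = ln(ε^n) = n·ln ε, one has τ_{t_n} = (T_{n+1}(a) + i√d)/T_n(a). -/

import Mathlib

open Complex

/-- The normalized Chebyshev polynomial of the first kind (indexed by `ℤ`),
characterized by `T n (X + X⁻¹) = X ^ n + X ^ (-n)`. -/
noncomputable def chebT (n : ℤ) (x : ℝ) : ℝ :=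
  2 * (Polynomial.Chebyshev.T ℝ n).eval (x / 2)

/-- Möbius action of a real 2×2 matrix `[[p,q],[r,s]]` on `τ`: `(pτ+q)/(rτ+s)`. -/
noncomputable def moebius (M : Matrix (Fin 2) (Fin 2) ℝ) (τ : ℂ) : ℂ :=
  ((M 0 0 : ℂ) * τ + (M 0 1 : ℂ)) / ((M 1 0 : ℂ) * τ + (M 1 1 : ℂ))

theorem geodesic_discretization (a : ℤ) (ha : 3 ≤ a) (d : ℝ) (hd : d = (a : ℝ) ^ 2 - 4)
    (ε : ℝ) (hε : ε = ((a : ℝ) + Real.sqrt d) / 2)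
    (U A : Matrix (Fin 2) (Fin 2) ℝ)
    (hU : U = !![(a : ℝ), -1; 1, 0]) (hA : A = !![1, 1; ε⁻¹, ε])
    (τ : ℝ → ℂ)
    (hτ : ∀ t : ℝ, τ t = moebius (U * A * !![Real.exp (t / 2), 0; 0, Real.exp (-t / 2)])
      Complex.I)
    (n : ℤ) :
    τ (n * Real.log ε) =
      ((chebT (n + 1) (a : ℝ) : ℂ) + Complex.I * (Real.sqrt d : ℂ)) / (chebT n (a : ℝ) : ℂ) := by
  have ha' : (3 : ℝ) ≤ a := by exact_mod_cast ha
  have hd0 : 0 ≤ d := by rw [hd]; nlinarith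
  have hs := Real.sq_sqrt hd0
  have hs0 := Real.sqrt_nonneg d
  have hpos : 0 < ε := by rw [hε]; linarith
  have hinv : ε⁻¹ = ((a : ℝ) - Real.sqrt d) / 2 := by
    symm
    apply eq_inv_of_mul_eq_one_left
    rw [hε]; nlinarith
  obtain ⟨L, hL⟩ : ∃ L, ε = Real.exp L := ⟨Real.log ε, (Real.exp_log hpos).symm⟩
  have hlog : Real.log ε = L := by rw [hL, Real.log_exp]
  have hinv' : ε⁻¹ = Real.exp (-L) := by rw [hL, Real.exp_neg]
  have hcosh : (a : ℝ) / 2 = Real.cosh L := by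
    rw [Real.cosh_eq, ← hL, ← hinv', hinv, hε]; ring
  have hT : ∀ m : ℤ, chebT m (a : ℝ) = Real.exp (m * L) + Real.exp (-(m * L)) := by
    intro m
    rw [chebT, hcosh, Polynomial.Chebyshev.T_real_cosh, Real.cosh_eq]; ring
  set s := Real.exp (n * L / 2) with hsdef
  have hspos : 0 < s := Real.exp_pos _
  have hs2 : Real.exp (n * L) = s ^ 2 := by
    rw [hsdef, ← Real.exp_nat_mul]; congr 1; push_cast; ring
  have hs3 : Real.exp (-(n * L) / 2) = s⁻¹ := by
    rw [hsdef, ← Real.exp_neg]; congr 1; ring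
  have hTn : chebT n (a : ℝ) = s ^ 2 + (s⁻¹) ^ 2 := by
    rw [hT, Real.exp_neg, hs2, inv_pow]
  have hTn1 : chebT (n + 1) (a : ℝ) = ε * s ^ 2 + ε⁻¹ * (s⁻¹) ^ 2 := by
    have h : ((n + 1 : ℤ) : ℝ) * L = L + n * L := by push_cast; ring
    rw [hT, Real.exp_neg, h, Real.exp_add, hs2, ← hL, inv_pow, mul_inv]
  have hsq : Real.sqrt d = ε - ε⁻¹ := by rw [hinv, hε]; ring
  have haε : (a : ℝ) = ε + ε⁻¹ := by rw [hinv, hε]; ring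
  have hM : U * A * !![s, 0; 0, s⁻¹] = !![ε * s, ε⁻¹ * s⁻¹; s, s⁻¹] := by
    rw [hU, hA, haε]
    ext i j
    fin_cases i <;> fin_cases j <;> simp [Matrix.mul_apply, Fin.sum_univ_two]
  rw [hτ, hlog, ← hsdef, hs3, hM, hTn, hTn1, hsq]
  have hden : (s : ℂ) ^ 2 + ((s : ℂ)⁻¹) ^ 2 ≠ 0 := by
    have : s ^ 2 + (s⁻¹) ^ 2 ≠ 0 := by positivity
    exact_mod_cast this
  have hss : (s : ℂ) * (s : ℂ)⁻¹ = 1 :=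
    mul_inv_cancel₀ (by exact_mod_cast hspos.ne')
  have hfac : ((s : ℂ) * I + (s : ℂ)⁻¹) * (-(s : ℂ) * I + (s : ℂ)⁻¹)
      = (s : ℂ) ^ 2 + ((s : ℂ)⁻¹) ^ 2 := by
    linear_combination (-(s : ℂ) ^ 2) * I_sq
  have hden1 : (s : ℂ) * I + (s : ℂ)⁻¹ ≠ 0 := by
    intro h
    rw [h, zero_mul] at hfac
    exact hden hfac.symm
  simp only [moebius, Matrix.of_apply, Matrix.cons_val', Matrix.cons_val_zero,
    Matrix.cons_val_one, Matrix.cons_val_fin_one]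
  push_cast
  rw [div_eq_div_iff hden1 hden, ← hfac]
  generalize (s : ℂ)⁻¹ = r at *
  generalize (ε : ℂ)⁻¹ = e at *
  have key : ((ε : ℂ) * s * I + e * r) * (-(s : ℂ) * I + r)
      = ε * s ^ 2 + e * r ^ 2 + I * (ε - e) := by
    linear_combination (-(ε : ℂ) * s ^ 2) * I_sq + I * (ε - e) * hss
  rw [← key]; ring
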